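/- Let K be a field and m ≥ 3. Write x^k := node([x,…,x]) for the k-corolla (k copies of x) and x² := node([x,x]). Then, in the free K-module on PRT': x ⧢ x^m = (m+1)·x^{m+1} + 2·Σ_{i=1}^{m} node([x,…,x, x², x,…,x]) (the arity-m grafting with x² in position i and x elsewhere) + x·x^m + x^m·x. -/

import Mathlib

inductive PTree : Type where
  | node : List PTree → PTree

namespace PTree

/-- the single-vertex tree -/
def x : PTree := node []

/-- the number of leaves of a tree -/
def deg : PTree → ℕ
  | node l => max 1 (l.attach.map fun t => deg t.1).sum
decreasing_by
  have := List.sizeOf_lt_of_mem t.2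
  simp; omega

/-- a tree is reduced if no vertex has arity 1 -/
inductive Reduced : PTree → Prop where
  | node (l : List PTree) (hlen : l.length ≠ 1) (h : ∀ t ∈ l, Reduced t) :
      Reduced (node l)

/-- the reduction of a tree -/
def red : PTree → PTree
  | node [t] => red t
  | node l => node (l.attach.map fun t => red t.1)
decreasing_by
  · simp; omega
  · have := List.sizeOf_lt_of_mem t.2
    simp; omega

mutual
/-- the spanning subtree `T_I` determined by a set `I ⊆ range (deg T)` of leaf positions
(counted from the left, starting at `0`) -/
def sub : PTree → Finset ℕ → PTree
  | node l, I => node (subList l I)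
/-- auxiliary: the list of spanning subtrees of the children, children without
selected leaves being dropped -/
def subList : List PTree → Finset ℕ → List PTree
  | [], _ => []
  | t :: ts, I =>
      (if (I.filter (· < t.deg)).Nonempty then [sub t (I.filter (· < t.deg))] else [])
        ++ subList ts ((I.filter fun j => t.deg ≤ j).image fun j => j - t.deg)
end

/-- the contraction `T|I`: the reduction of the spanning subtree, `1` (i.e. `none`) if `I = ∅` -/
def contract (T : PTree) (I : Finset ℕ) : Option PTree :=
  if I = ∅ then none else some (red (sub T I))

end PTree

/-- `PRT'`: finite planar rooted trees together with the empty tree `1 = none` -/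
abbrev OT := Option PTree

/-- `deg` on `PRT'` -/
def degO (o : OT) : ℕ := o.elim 0 PTree.deg

/-- membership in `PRT'` = reduced trees together with the empty tree `1` -/
def ROT (o : OT) : Prop := ∀ t, o = some t → t.Reduced

/-- contraction on `PRT'` -/
def contractO : OT → Finset ℕ → OT
  | none, _ => none
  | some t, I => PTree.contract t I

open Classical in
/-- `N_{S,T}(V)` as a finite set of subsets of the set of leaf positions of `V` -/
noncomputable def NFinset (S T V : OT) : Finset (Finset ℕ) :=
  (Finset.range (degO V)).powerset.filter fun I =>
    contractO V I = S ∧ contractO V (Finset.range (degO V) \ I) = T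

/-- `#N_{S,T}(V)` -/
noncomputable def Ncount (S T V : OT) : ℕ := (NFinset S T V).card

/-- the free `K`-module on `PRT'` (realized inside the free module on all of `Option PTree`;
the elements of the free module on `PRT'` are those whose support satisfies `ROT`) -/
abbrev AMod (K : Type) [Field K] := OT →₀ K

/-- `f` belongs to the free `K`-module on `PRT'` -/
def suppRed (K : Type) [Field K] (f : AMod K) : Prop := ∀ t ∈ f.support, ROT t

/-- the planar shuffle product `S ⧢ T = Σ_{V ∈ PRT'} #N_{S,T}(V)·V` of two monomials -/
noncomputable def shuffleM (K : Type) [Field K] (S T : OT) : AMod K :=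
  ∑ᶠ (V : OT) (_ : ROT V), Finsupp.single V ((Ncount S T V : K))

/-- the `K`-bilinear extension of the planar shuffle product -/
noncomputable def shuffleF (K : Type) [Field K] (f g : AMod K) : AMod K :=
  f.sum fun S a => g.sum fun T b => (a * b) • shuffleM K S T

/-- tensor-like product of a list of module elements, as a finitely supported
function on lists of basis elements -/
noncomputable def listProd (K : Type) [Field K] {σ : Type} : List (σ →₀ K) → (List σ →₀ K)
  | [] => Finsupp.single [] 1
  | f :: fs => f.sum fun t a => (listProd K fs).sum fun ts b => Finsupp.single (t :: ts) (a * b)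

/-- the `K`-multilinear extension of an operation on basis elements -/
noncomputable def mulExt (K : Type) [Field K] {σ τ : Type} (op : List σ → τ)
    (l : List (σ →₀ K)) : τ →₀ K :=
  (listProd K l).sum fun ts c => Finsupp.single (op ts) c

/-- `gr` : delete all entries equal to `1`, then return `1` if no entry remains,
the unique entry if exactly one remains, and the grafting `node` otherwise -/
def grO (ts : List OT) : OT :=
  match ts.reduceOption with
  | [] => none
  | [t] => some t
  | l => some (PTree.node l)

/-- the `K`-multilinear extension of `gr` -/
noncomputable def grF (K : Type) [Field K] (l : List (AMod K)) : AMod K := mulExt K grO l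

/-- the `K`-multilinear extension of the grafting `node` (junk value `0` on lists
containing the empty tree `1`, which never occurs in its uses here) -/
noncomputable def nodeF (K : Type) [Field K] (l : List (AMod K)) : AMod K :=
  (listProd K l).sum fun ts c =>
    match (ts.mapM (id : Option PTree → Option PTree) : Option (List PTree)) with
    | some l' => Finsupp.single (some (PTree.node l')) c
    | none => 0

/-!
A leaf `x` is shuffled into `T` exactly when deleting one leaf of `V` gives back `T`: the sets `I`
with `V|I = x` are the singletons, so `#N_{x,T}(V)` counts the leaves of `V` whose deletion yields
`T`. Deletion and insertion of a leaf are adjoint: that number is also the multiplicity of `V` among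
the trees obtained from `T` by inserting a leaf, which happens either beside the root of `T`
(`x·T` and `T·x`), or as a new child of the root, or inside one child. For the corolla `x^m` the
`m + 1` new children all give `x^{m+1}`, and inserting into a child `x` gives `x²` twice.
-/

/-- The leaf positions of the remaining trees of a forest, once its first tree, with `d` leaves, is
removed. -/
def shiftDown (d : ℕ) (I : Finset ℕ) : Finset ℕ := (I.filter (d ≤ ·)).image (· - d)

theorem mem_shiftDown {d j : ℕ} {I : Finset ℕ} : j ∈ shiftDown d I ↔ d + j ∈ I := by
  simp only [shiftDown, Finset.mem_image, Finset.mem_filter]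
  constructor
  · rintro ⟨i, ⟨hi, hdi⟩, rfl⟩
    rwa [Nat.add_sub_cancel' hdi]
  · exact fun h => ⟨d + j, ⟨h, Nat.le_add_right d j⟩, Nat.add_sub_cancel_left d j⟩

theorem card_filter_lt_add_card_shiftDown (d : ℕ) (I : Finset ℕ) :
    (I.filter (· < d)).card + (shiftDown d I).card = I.card := by
  rw [shiftDown, Finset.card_image_of_injOn,
    ← Finset.card_filter_add_card_filter_not (s := I) (· < d)]
  · simp only [not_lt]
  · intro a ha b hb hab
    simp only [Finset.coe_filter, Set.mem_ofPred_eq] at ha hb hab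
    lia

theorem filter_lt_subset_range (d : ℕ) (I : Finset ℕ) :
    I.filter (· < d) ⊆ Finset.range d := fun i hi => by simp_all

theorem shiftDown_subset_range {a b : ℕ} {I : Finset ℕ} (hI : I ⊆ Finset.range (a + b)) :
    shiftDown a I ⊆ Finset.range b := fun j hj => by
  simpa using hI (mem_shiftDown.1 hj)

theorem count_map_cons {α : Type*} [DecidableEq α] (a b : α) (L : List (List α)) (l : List α) :
    (L.map (a :: ·)).count (b :: l) = if a = b then L.count l else 0 := by
  split_ifs with h
  · rw [← h, List.count_map_of_injective _ _ List.cons_injective]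
  · simp [List.count_eq_zero, h]

theorem count_map_cons_const {α : Type*} [DecidableEq α] (b : α) (L : List α) (l l' : List α) :
    (L.map (· :: l)).count (b :: l') = if l = l' then L.count b else 0 := by
  split_ifs with h
  · rw [← h, List.count_map_of_injective _ _ fun _ _ => List.head_eq_of_cons_eq]
  · simp [List.count_eq_zero, h]

theorem count_map_toList_append {α : Type*} [DecidableEq α] (L : List (Option α)) (a : α)
    (l l' : List α) :
    (L.map (·.toList ++ l)).count (a :: l') =
      (if l = a :: l' then L.count none else 0) + if l = l' then L.count (some a) else 0 := by
  induction L with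
  | nil => simp
  | cons o L ih =>
    rw [List.map_cons, List.count_cons, ih]
    rcases o with _ | b
    · by_cases h : l = a :: l' <;> simp [h]
    · by_cases h : b = a <;> by_cases h' : l = l' <;> simp [h, h']

theorem count_map_toList_append_nil {α : Type*} [DecidableEq α] (L : List (Option α)) (l : List α) :
    (L.map (·.toList ++ l)).count [] = if l = [] then L.count none else 0 := by
  induction L with
  | nil => simp
  | cons o L ih =>
    rw [List.map_cons, List.count_cons, ih]
    rcases o with _ | b <;> by_cases h : l = [] <;> simp [h]

theorem mem_NFinset {S T V : OT} {I : Finset ℕ} :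
    I ∈ NFinset S T V ↔ I ⊆ Finset.range (degO V) ∧
      contractO V I = S ∧ contractO V (Finset.range (degO V) \ I) = T := by
  classical rw [NFinset, Finset.mem_filter, Finset.mem_powerset]

namespace PTree

/-! ### Degree and reduction -/

/-- The total number of leaves of a forest. -/
def degL (l : List PTree) : ℕ := (l.map deg).sum

theorem degL_nil : degL [] = 0 := rfl

theorem degL_cons (t : PTree) (ts : List PTree) : degL (t :: ts) = t.deg + degL ts := by
  simp only [degL, List.map_cons, List.sum_cons]

theorem deg_node (l : List PTree) : deg (node l) = max 1 (degL l) := by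
  rw [deg, degL, List.attach_map_val]

theorem deg_x : deg x = 1 := by rw [x, deg_node, degL_nil, max_eq_left zero_le_one]

theorem deg_pos (t : PTree) : 0 < t.deg := by
  obtain ⟨l⟩ := t
  rw [deg_node]
  exact Nat.lt_of_lt_of_le one_pos (le_max_left _ _)

theorem length_le_degL (l : List PTree) : l.length ≤ degL l := by
  induction l with
  | nil => rfl
  | cons t ts ih =>
    have := t.deg_pos
    rw [degL_cons, List.length_cons]
    lia

theorem deg_node_of_ne_nil {l : List PTree} (hl : l ≠ []) : deg (node l) = degL l := by
  rw [deg_node, max_eq_right ((List.length_pos_iff.2 hl).trans_le (length_le_degL l))]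

theorem node_injective : Function.Injective node := fun _ _ => node.inj

theorem reduced_node {l : List PTree} :
    Reduced (node l) ↔ l.length ≠ 1 ∧ ∀ t ∈ l, Reduced t :=
  ⟨fun | .node _ hlen h => ⟨hlen, h⟩, fun h => .node l h.1 h.2⟩

theorem reduced_x : Reduced x := reduced_node.2 (by simp)

theorem eq_x_of_deg_eq_one {t : PTree} (ht : Reduced t) (hdeg : t.deg = 1) : t = x := by
  obtain ⟨l⟩ := t
  have hlen : l.length ≤ 1 := (length_le_degL l).trans (by rw [← hdeg, deg_node]; lia)
  have := (reduced_node.1 ht).1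
  rw [x, List.length_eq_zero_iff.1 (show l.length = 0 by lia)]

theorem red_node_singleton (t : PTree) : red (node [t]) = red t := by rw [red]

theorem red_node {l : List PTree} (hl : l.length ≠ 1) : red (node l) = node (l.map red) := by
  rw [red, List.attach_map_val]
  rintro t rfl
  exact hl rfl

theorem reduced_red (t : PTree) : Reduced (red t) := by
  induction t using red.induct with
  | case1 t ih => rwa [red_node_singleton]
  | case2 l hl ih =>
    have hlen : l.length ≠ 1 := fun h => (List.length_eq_one_iff.1 h).elim hl
    rw [red_node hlen, reduced_node, List.length_map, List.forall_mem_map]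
    exact ⟨hlen, fun t ht => ih ⟨t, ht⟩⟩

/-- The tree obtained by joining the trees of a forest at a common root; the root is only created
when there are at least two trees, and the empty forest gives `1`. -/
def graft (l : List PTree) : OT := grO (l.map some)

theorem graft_nil : graft [] = none := rfl

theorem graft_singleton (t : PTree) : graft [t] = some t := rfl

theorem graft_of_two_le_length {l : List PTree} (hl : 2 ≤ l.length) :
    graft l = some (node l) := by
  obtain _ | ⟨s, _ | ⟨t, l⟩⟩ := l
  · contradiction
  · simp at hl
  · simp [graft, grO, List.reduceOption]

theorem degO_graft (l : List PTree) : degO (graft l) = degL l := by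
  rcases l with _ | ⟨s, _ | ⟨t, l⟩⟩
  · rfl
  · rfl
  · rw [graft_of_two_le_length (by simp)]
    exact deg_node_of_ne_nil (by simp)

theorem graft_map_red {l : List PTree} (hl : l ≠ []) :
    graft (l.map red) = some (red (node l)) := by
  rcases l with _ | ⟨s, _ | ⟨t, l⟩⟩
  · contradiction
  · rw [red_node_singleton]; rfl
  · rw [graft_of_two_le_length (by simp), red_node (by simp)]

theorem graft_eq_some_x {l : List PTree} : graft l = some x ↔ l = [x] := by
  rcases l with _ | ⟨s, _ | ⟨t, l⟩⟩
  · simp [graft_nil]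
  · simp [graft_singleton]
  · simp [graft_of_two_le_length, x]

theorem graft_eq_some_node {l ts : List PTree} (hts : 2 ≤ ts.length) :
    graft l = some (node ts) ↔ l = ts ∨ l = [node ts] := by
  rcases l with _ | ⟨s, _ | ⟨t, l⟩⟩
  · have : [] ≠ ts := by rintro rfl; simp at hts
    simp [graft_nil, this]
  · have : [s] ≠ ts := by rintro rfl; simp at hts
    simp [graft_singleton, this]
  · simp [graft_of_two_le_length]

/-! ### Contraction -/

/-- The contraction of a forest to a set of leaf positions; trees without selected leaves
disappear. -/
def forestContract (l : List PTree) (I : Finset ℕ) : List PTree := (subList l I).map red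

theorem contract_empty (t : PTree) : contract t ∅ = none := if_pos rfl

theorem contract_of_nonempty (t : PTree) {I : Finset ℕ} (hI : I.Nonempty) :
    contract t I = some (red (sub t I)) := if_neg hI.ne_empty

theorem contract_eq_none {t : PTree} {I : Finset ℕ} : contract t I = none ↔ I = ∅ := by
  simp [contract]

theorem contract_x {I : Finset ℕ} (hI : I.Nonempty) : contract x I = some x := by
  rw [contract_of_nonempty x hI, x, sub, subList, red_node (by simp), List.map_nil]

theorem forestContract_nil (I : Finset ℕ) : forestContract [] I = [] := by
  rw [forestContract, subList, List.map_nil]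

theorem forestContract_cons (t : PTree) (ts : List PTree) (I : Finset ℕ) :
    forestContract (t :: ts) I =
      (contract t (I.filter (· < t.deg))).toList ++ forestContract ts (shiftDown t.deg I) := by
  rw [forestContract, subList, List.map_append]
  congr 1
  split_ifs with h
  · rw [contract_of_nonempty t h]; rfl
  · rw [Finset.not_nonempty_iff_eq_empty.1 h, contract_empty]; rfl

theorem forestContract_eq_nil {l : List PTree} {I : Finset ℕ} (hI : I ⊆ Finset.range (degL l)) :
    forestContract l I = [] ↔ I = ∅ := by
  induction l generalizing I with
  | nil => simpa [forestContract_nil, degL_nil] using hI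
  | cons t ts ih =>
    rw [degL_cons] at hI
    rw [forestContract_cons, List.append_eq_nil_iff, ih (shiftDown_subset_range hI),
      Option.toList_eq_nil_iff, contract_eq_none, ← Finset.card_eq_zero, ← Finset.card_eq_zero,
      ← Finset.card_eq_zero, ← card_filter_lt_add_card_shiftDown t.deg I, Nat.add_eq_zero_iff]

theorem contract_node {l : List PTree} (hl : l ≠ []) {I : Finset ℕ}
    (hI : I ⊆ Finset.range (deg (node l))) : contract (node l) I = graft (forestContract l I) := by
  rw [deg_node_of_ne_nil hl] at hI
  rcases I.eq_empty_or_nonempty with rfl | hne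
  · rw [contract_empty, (forestContract_eq_nil hI).2 rfl, graft_nil]
  · have hsub : subList l I ≠ [] := fun h =>
      hne.ne_empty ((forestContract_eq_nil hI).1 (by rw [forestContract, h, List.map_nil]))
    rw [contract_of_nonempty _ hne, sub, forestContract, graft_map_red hsub]

theorem degL_forestContract {l : List PTree}
    (hl : ∀ t ∈ l, ∀ I ⊆ Finset.range t.deg, degO (contract t I) = I.card)
    {I : Finset ℕ} (hI : I ⊆ Finset.range (degL l)) : degL (forestContract l I) = I.card := by
  induction l generalizing I with
  | nil =>
    rw [forestContract_nil, Finset.subset_empty.1 hI]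
    rfl
  | cons t ts ih =>
    rw [List.forall_mem_cons] at hl
    rw [degL_cons] at hI
    have hhead : degL (contract t (I.filter (· < t.deg))).toList
        = degO (contract t (I.filter (· < t.deg))) := by
      cases contract t (I.filter (· < t.deg)) <;> rfl
    rw [forestContract_cons, degL, List.map_append, List.sum_append, ← degL, ← degL, hhead,
      hl.1 _ (filter_lt_subset_range _ I), ih hl.2 (shiftDown_subset_range hI),
      card_filter_lt_add_card_shiftDown]

theorem degO_contract (t : PTree) {I : Finset ℕ} (hI : I ⊆ Finset.range t.deg) :
    degO (contract t I) = I.card := by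
  induction t using deg.induct generalizing I with
  | case1 l ih =>
    rcases eq_or_ne l [] with rfl | hl
    · rcases I.eq_empty_or_nonempty with rfl | hne
      · rw [contract_empty]; rfl
      · have hle := Finset.card_le_card hI
        rw [← x, deg_x, Finset.card_range] at hle
        rw [← x, contract_x hne, le_antisymm hle hne.card_pos]
        exact deg_x
    · rw [contract_node hl hI, degO_graft]
      rw [deg_node_of_ne_nil hl] at hI
      exact degL_forestContract (fun t ht I hI => ih ⟨t, ht⟩ hI) hI

theorem contract_eq_some_x {t : PTree} {I : Finset ℕ} (hI : I ⊆ Finset.range t.deg) :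
    contract t I = some x ↔ I.card = 1 := by
  rw [← degO_contract t hI]
  constructor
  · intro h
    rw [h]
    exact deg_x
  · rcases I.eq_empty_or_nonempty with rfl | hne
    · rw [contract_empty]
      exact fun h => absurd h zero_ne_one
    · rw [contract_of_nonempty t hne]
      exact fun h => congrArg some (eq_x_of_deg_eq_one (reduced_red _) h)

theorem forestContract_range {l : List PTree}
    (hl : ∀ t ∈ l, contract t (Finset.range t.deg) = some t) :
    forestContract l (Finset.range (degL l)) = l := by
  induction l with
  | nil => exact forestContract_nil _
  | cons t ts ih =>
    rw [List.forall_mem_cons] at hl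
    have hhead : (Finset.range (degL (t :: ts))).filter (· < t.deg) = Finset.range t.deg := by
      ext i
      simp only [degL_cons, Finset.mem_filter, Finset.mem_range]
      lia
    have htail : shiftDown t.deg (Finset.range (degL (t :: ts))) = Finset.range (degL ts) := by
      ext i
      simp only [degL_cons, mem_shiftDown, Finset.mem_range]
      lia
    rw [forestContract_cons, hhead, htail, hl.1, ih hl.2]
    rfl

theorem contract_range {t : PTree} (ht : Reduced t) :
    contract t (Finset.range t.deg) = some t := by
  induction ht with
  | node l hlen _ ih =>
    rcases eq_or_ne l [] with rfl | hl
    · exact contract_x (Finset.nonempty_range_iff.2 (deg_pos _).ne')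
    · have := List.length_pos_iff.2 hl
      rw [contract_node hl Finset.Subset.rfl, deg_node_of_ne_nil hl, forestContract_range ih,
        graft_of_two_le_length (by lia)]

/-! ### Deleting a leaf -/

/-- The contractions of a tree to the complement of a single leaf, from left to right. -/
def deletions (t : PTree) : List OT :=
  (List.range t.deg).map fun i => contract t (Finset.range t.deg \ {i})

/-- The contractions of a forest to the complement of a single leaf, from left to right. -/
def forestDeletions (l : List PTree) : List (List PTree) :=
  (List.range (degL l)).map fun i => forestContract l (Finset.range (degL l) \ {i})

theorem forestContract_cons_sdiff_of_lt {t : PTree} {ts : List PTree} (hts : ∀ s ∈ ts, Reduced s)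
    {i : ℕ} (hi : i < t.deg) :
    forestContract (t :: ts) (Finset.range (t.deg + degL ts) \ {i}) =
      (contract t (Finset.range t.deg \ {i})).toList ++ ts := by
  have hhead : (Finset.range (t.deg + degL ts) \ {i}).filter (· < t.deg)
      = Finset.range t.deg \ {i} := by ext; grind
  have htail : shiftDown t.deg (Finset.range (t.deg + degL ts) \ {i})
      = Finset.range (degL ts) := by ext; grind [mem_shiftDown]
  rw [forestContract_cons, hhead, htail, forestContract_range fun s hs => contract_range (hts s hs)]

theorem forestContract_cons_sdiff_add {t : PTree} (ht : Reduced t) (ts : List PTree) (i : ℕ) :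
    forestContract (t :: ts) (Finset.range (t.deg + degL ts) \ {t.deg + i}) =
      t :: forestContract ts (Finset.range (degL ts) \ {i}) := by
  have hhead : (Finset.range (t.deg + degL ts) \ {t.deg + i}).filter (· < t.deg)
      = Finset.range t.deg := by ext; grind
  have htail : shiftDown t.deg (Finset.range (t.deg + degL ts) \ {t.deg + i})
      = Finset.range (degL ts) \ {i} := by ext; grind [mem_shiftDown]
  rw [forestContract_cons, hhead, htail, contract_range ht]
  rfl

theorem deletions_x : deletions x = [none] := by
  simp [deletions, deg_x, contract_eq_none]

theorem deletions_node {l : List PTree} (hl : l ≠ []) :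
    deletions (node l) = (forestDeletions l).map graft := by
  rw [deletions, forestDeletions, List.map_map, ← deg_node_of_ne_nil hl]
  exact List.map_congr_left fun i _ => contract_node hl Finset.sdiff_subset

theorem forestDeletions_nil : forestDeletions [] = [] := rfl

theorem forestDeletions_cons {t : PTree} (ht : Reduced t) {ts : List PTree}
    (hts : ∀ s ∈ ts, Reduced s) :
    forestDeletions (t :: ts) =
      (deletions t).map (·.toList ++ ts) ++ (forestDeletions ts).map (t :: ·) := by
  simp only [forestDeletions, deletions, degL_cons, List.range_add, List.map_append, List.map_map]
  congr 1
  · exact List.map_congr_left fun i hi =>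
      forestContract_cons_sdiff_of_lt hts (List.mem_range.1 hi)
  · exact List.map_congr_left fun i _ => forestContract_cons_sdiff_add ht ts i

/-! ### Inserting a leaf -/

mutual
/-- The reduced trees obtained from a reduced tree by inserting a leaf, listed with multiplicity.
The single-vertex tree is treated apart because inserting a child below it would create a vertex of
arity 1. -/
def insertions : PTree → List PTree
  | node [] => [node [x, x], node [x, x]]
  | node (t :: ts) =>
      node [x, node (t :: ts)] :: node [node (t :: ts), x] :: (forestInsertions (t :: ts)).map node
/-- The forests obtained from a forest by inserting a leaf, either as a new tree or into one of the
trees, listed with multiplicity. -/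
def forestInsertions : List PTree → List (List PTree)
  | [] => [[x]]
  | t :: ts =>
      (x :: t :: ts) :: ((insertions t).map (· :: ts) ++ (forestInsertions ts).map (t :: ·))
end

theorem insertions_x : insertions x = [[x, x], [x, x]].map node := by
  rw [x, insertions]
  rfl

theorem insertions_node {l : List PTree} (hl : l ≠ []) :
    insertions (node l) = ([[x, node l], [node l, x]] ++ forestInsertions l).map node := by
  cases l with
  | nil => contradiction
  | cons t ts => rw [insertions]; rfl

theorem nil_notMem_forestInsertions (l : List PTree) : [] ∉ forestInsertions l := by
  cases l <;> simp [forestInsertions]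

theorem x_notMem_insertions (t : PTree) : x ∉ insertions t := by
  obtain ⟨_ | ⟨t, ts⟩⟩ := t <;> simp [insertions, x, nil_notMem_forestInsertions]

theorem length_le_of_mem_forestInsertions {l ts : List PTree} (h : l ∈ forestInsertions ts) :
    ts.length ≤ l.length := by
  induction ts generalizing l with
  | nil => exact Nat.zero_le _
  | cons t ts ih =>
    simp only [forestInsertions, List.mem_cons, List.mem_append, List.mem_map] at h
    obtain rfl | ⟨_, _, rfl⟩ | ⟨l, hl, rfl⟩ := h
    · exact Nat.le_succ _
    · exact le_rfl
    · exact Nat.succ_le_succ (ih hl)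

theorem forall_reduced_of_mem_forestInsertions {ts : List PTree} (hts : ∀ t ∈ ts, Reduced t)
    (hins : ∀ t ∈ ts, ∀ v ∈ insertions t, Reduced v) {l : List PTree}
    (h : l ∈ forestInsertions ts) : ∀ v ∈ l, Reduced v := by
  induction ts generalizing l with
  | nil => simp_all [forestInsertions, reduced_x]
  | cons t ts ih =>
    rw [List.forall_mem_cons] at hts hins
    simp only [forestInsertions, List.mem_cons, List.mem_append, List.mem_map] at h
    obtain rfl | ⟨v, hv, rfl⟩ | ⟨l, hl, rfl⟩ := h
    · exact List.forall_mem_cons.2 ⟨reduced_x, List.forall_mem_cons.2 hts⟩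
    · exact List.forall_mem_cons.2 ⟨hins.1 v hv, hts.2⟩
    · exact List.forall_mem_cons.2 ⟨hts.1, ih hts.2 hins.2 hl⟩

theorem reduced_of_mem_insertions {t v : PTree} (ht : Reduced t) (hv : v ∈ insertions t) :
    Reduced v := by
  induction ht generalizing v with
  | node ts hlen hts ih =>
    rcases eq_or_ne ts [] with rfl | hne
    · rw [← x, insertions_x] at hv
      simp_all [reduced_node, reduced_x]
    · have := List.length_pos_iff.2 hne
      have ht : Reduced (node ts) := .node ts hlen hts
      rw [insertions_node hne, List.mem_map] at hv
      obtain ⟨l, hl, rfl⟩ := hv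
      simp only [List.mem_append, List.mem_cons, List.not_mem_nil, or_false] at hl
      obtain (rfl | rfl) | hl := hl
      · simp [reduced_node (l := [x, _]), reduced_x, ht]
      · simp [reduced_node (l := [_, x]), reduced_x, ht]
      · have := length_le_of_mem_forestInsertions hl
        exact .node l (by lia)
          (forall_reduced_of_mem_forestInsertions hts (fun t ht v => ih t ht) hl)

theorem reduced_node_replicate_x {m : ℕ} (hm : m ≠ 1) : Reduced (node (List.replicate m x)) :=
  .node _ (by simpa using hm) fun _ h => List.eq_of_mem_replicate h ▸ reduced_x

theorem sum_map_forestInsertions_replicate_x {M : Type*} [AddCommMonoid M] (m : ℕ)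
    (f : List PTree → M) :
    ((forestInsertions (List.replicate m x)).map f).sum =
      (m + 1) • f (List.replicate (m + 1) x) +
        2 • ∑ i ∈ Finset.range m, f ((List.replicate m x).set i (node [x, x])) := by
  induction m generalizing f with
  | zero => simp [forestInsertions]
  | succ m ih =>
    rw [List.replicate_succ, forestInsertions, insertions_x, Finset.sum_range_succ']
    simp only [List.map_cons, List.map_append, List.map_map, List.map_nil, List.sum_cons,
      List.sum_append, List.sum_nil, ih, List.set_cons_succ, List.set_cons_zero,
      Function.comp_apply, List.replicate_succ]
    rw [succ_nsmul _ (m + 1), smul_add, two_nsmul (f _)]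
    abel

/-! ### Duality of deletion and insertion -/

section Counting

variable [DecidableEq PTree]

theorem count_none_deletions {t : PTree} (ht : Reduced t) :
    (deletions t).count none = if t = x then 1 else 0 := by
  split_ifs with h
  · rw [h, deletions_x]
    rfl
  · refine List.count_eq_zero.2 fun hmem => h (eq_x_of_deg_eq_one ht ?_)
    obtain ⟨i, hi, hcontract⟩ := List.mem_map.1 hmem
    have hcard := Finset.card_eq_zero.2 (contract_eq_none.1 hcontract)
    rw [Finset.card_sdiff_of_subset (by simpa using hi), Finset.card_range,
      Finset.card_singleton] at hcard
    have := t.deg_pos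
    lia

theorem count_forestDeletions {l : List PTree} (hl : ∀ v ∈ l, Reduced v)
    (hdual : ∀ v ∈ l, ∀ t, Reduced t → (deletions v).count (some t) = (insertions t).count v)
    {ts : List PTree} (hts : ∀ t ∈ ts, Reduced t) :
    (forestDeletions l).count ts = (forestInsertions ts).count l := by
  induction l generalizing ts with
  | nil =>
    rw [forestDeletions_nil, List.count_nil, List.count_eq_zero.2 (nil_notMem_forestInsertions ts)]
  | cons v vs ih =>
    rw [List.forall_mem_cons] at hl hdual
    rw [forestDeletions_cons hl.1 hl.2, List.count_append]
    cases ts with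
    | nil =>
      rw [count_map_toList_append_nil, count_none_deletions hl.1, forestInsertions]
      have hnil : [] ∉ (forestDeletions vs).map (v :: ·) := by simp
      rw [List.count_eq_zero.2 hnil, List.count_singleton]
      by_cases hv : v = x <;> by_cases hvs : vs = [] <;> grind
    | cons t ts =>
      rw [List.forall_mem_cons] at hts
      rw [count_map_toList_append, count_map_cons, count_none_deletions hl.1,
        hdual.1 t hts.1, ih hl.2 hdual.2 hts.2, forestInsertions, List.count_cons,
        List.count_append, count_map_cons_const, count_map_cons]
      simp only [beq_iff_eq, List.cons.injEq, eq_comm (a := x), eq_comm (a := t),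
        eq_comm (a := ts), eq_comm (a := t :: ts)]
      by_cases hv : v = x <;> by_cases hvs : vs = t :: ts <;> grind

theorem count_map_graft_x (L : List (List PTree)) :
    (L.map graft).count (some x) = L.count [x] := by
  simp only [List.count, List.countP_map, Function.comp_def, Bool.beq_eq_decide_eq,
    graft_eq_some_x]

theorem count_map_graft_node (L : List (List PTree)) {ts : List PTree} (hts : 2 ≤ ts.length) :
    (L.map graft).count (some (node ts)) = L.count ts + L.count [node ts] := by
  have hne : ts ≠ [node ts] := fun h => by
    rw [h] at hts
    simp at hts
  induction L with
  | nil => rfl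
  | cons d L ih =>
    simp only [List.map_cons, List.count_cons, ih, beq_iff_eq, graft_eq_some_node hts]
    by_cases hd : d = ts <;> grind

theorem count_forestInsertions_singleton (t : PTree) {l : List PTree} (hl : l.length ≠ 1) :
    (forestInsertions [t]).count l = [[x, t], [t, x]].count l := by
  have hmid : l ∉ (insertions t).map ([·]) := fun h => by
    obtain ⟨_, _, rfl⟩ := List.mem_map.1 h
    exact hl rfl
  simp only [forestInsertions, List.count_cons, List.count_append, List.count_eq_zero.2 hmid,
    List.map_cons, List.map_nil, List.count_nil]
  lia

theorem count_deletions {t v : PTree} (ht : Reduced t) (hv : Reduced v) :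
    (deletions v).count (some t) = (insertions t).count v := by
  induction hv generalizing t with
  | node l hlen hl ih =>
    rcases eq_or_ne l [] with rfl | hne
    · rw [← x, deletions_x, List.count_eq_zero.2 (x_notMem_insertions t)]
      rfl
    have hforest {ts : List PTree} (hts : ∀ s ∈ ts, Reduced s) :
        (forestDeletions l).count ts = (forestInsertions ts).count l :=
      count_forestDeletions hl (fun v hv t ht => ih v hv ht) hts
    have hsingle : (forestDeletions l).count [t] = [[x, t], [t, x]].count l := by
      rw [hforest (by simpa using ht), count_forestInsertions_singleton t hlen]
    rw [deletions_node hne]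
    obtain ⟨ts⟩ := t
    obtain ⟨hts, hts'⟩ := reduced_node.1 ht
    rcases eq_or_ne ts [] with rfl | htsne
    · rw [← x] at hsingle ⊢
      rw [count_map_graft_x, hsingle, insertions_x, List.count_map_of_injective _ _ node_injective]
    · have := List.length_pos_iff.2 htsne
      rw [count_map_graft_node _ (by lia), hforest hts', hsingle, insertions_node htsne,
        List.count_map_of_injective _ _ node_injective, List.count_append, add_comm]

end Counting

theorem Ncount_x_some [DecidableEq PTree] (t : PTree) (T : OT) :
    Ncount (some x) T (some t) = (deletions t).count T := by
  have hN : NFinset (some x) T (some t) =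
      ((Finset.range t.deg).filter fun i => contract t (Finset.range t.deg \ {i}) = T).image
        ({·}) := by
    ext I
    simp only [mem_NFinset, degO, contractO, Option.elim_some, Finset.mem_filter,
      Finset.mem_image]
    constructor
    · rintro ⟨hI, hx, hT⟩
      obtain ⟨i, rfl⟩ := Finset.card_eq_one.1 ((contract_eq_some_x hI).1 hx)
      exact ⟨i, ⟨Finset.singleton_subset_iff.1 hI, hT⟩, rfl⟩
    · rintro ⟨i, ⟨hi, hT⟩, rfl⟩
      have hI := Finset.singleton_subset_iff.2 hi
      exact ⟨hI, (contract_eq_some_x hI).2 (Finset.card_singleton i), hT⟩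
  rw [Ncount, hN, Finset.card_image_of_injective _ Finset.singleton_injective, deletions,
    List.count, List.countP_map, List.countP_eq_length_filter]
  simp only [Function.comp_def, beq_eq_decide]
  rfl

end PTree

/-! ### The shuffle product with a leaf -/

theorem shuffleM_eq_sum_of_Ncount (K : Type) [Field K] [BEq OT] [LawfulBEq OT] {S T : OT}
    {L : List OT} (hL : ∀ V ∈ L, ROT V) (hcount : ∀ V, ROT V → Ncount S T V = L.count V) :
    shuffleM K S T = (L.map fun V => Finsupp.single V (1 : K)).sum := by
  classical
  have hterm (V : OT) : ∑ᶠ _ : ROT V, Finsupp.single V (Ncount S T V : K) =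
      L.count V • Finsupp.single V 1 := by
    rw [Finsupp.smul_single, nsmul_one]
    by_cases hV : ROT V
    · rw [finsum_eq_if, if_pos hV, hcount V hV]
    · rw [finsum_eq_if, if_neg hV, List.count_eq_zero.2 fun h => hV (hL V h), Nat.cast_zero,
        Finsupp.single_zero]
  have hsupport : (fun V => L.count V • Finsupp.single V (1 : K)).support ⊆ L.toFinset := by
    intro V hV
    rw [Finset.mem_coe, List.mem_toFinset]
    by_contra h
    exact hV (by simp only [List.count_eq_zero.2 h, zero_smul])
  rw [shuffleM, finsum_congr hterm, finsum_eq_sum_of_support_subset _ hsupport]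
  convert (Finset.sum_list_map_count L fun V => Finsupp.single V (1 : K)).symm

theorem shuffleM_x_eq_sum_insertions (K : Type) [Field K] {t : PTree} (ht : t.Reduced) :
    shuffleM K (some PTree.x) (some t) =
      (t.insertions.map fun v => Finsupp.single (some v) (1 : K)).sum := by
  classical
  have hL : ∀ V ∈ t.insertions.map some, ROT V := by
    rintro _ hV v rfl
    rw [List.mem_map_of_injective (Option.some_injective _)] at hV
    exact PTree.reduced_of_mem_insertions ht hV
  rw [shuffleM_eq_sum_of_Ncount K hL, List.map_map]
  · rfl
  · rintro (_ | v) hv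
    · have hnone : none ∉ t.insertions.map some := by simp
      simp [Ncount, NFinset, contractO, List.count_eq_zero.2 hnone]
    · rw [PTree.Ncount_x_some, PTree.count_deletions ht (hv v rfl),
        List.count_map_of_injective _ _ (Option.some_injective _)]

theorem shuffle_x_corolla_general (K : Type) [Field K] (m : ℕ) (hm : 2 ≤ m) :
    shuffleM K (some PTree.x) (some (PTree.node (List.replicate m PTree.x)))
      = (m + 1) • Finsupp.single (some (PTree.node (List.replicate (m + 1) PTree.x))) 1
        + 2 • ∑ i ∈ Finset.range m,
            Finsupp.single (some (PTree.node
              ((List.replicate m PTree.x).set i (PTree.node [PTree.x, PTree.x])))) 1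
        + Finsupp.single (some (PTree.node
            [PTree.x, PTree.node (List.replicate m PTree.x)])) 1
        + Finsupp.single (some (PTree.node
            [PTree.node (List.replicate m PTree.x), PTree.x])) 1 := by
  have hne : List.replicate m PTree.x ≠ [] := by rw [Ne, List.replicate_eq_nil_iff]; lia
  rw [shuffleM_x_eq_sum_insertions K (PTree.reduced_node_replicate_x (by lia)),
    PTree.insertions_node hne]
  simp only [List.map_append, List.map_cons, List.map_nil, List.map_map, List.sum_append,
    List.sum_cons, List.sum_nil, PTree.sum_map_forestInsertions_replicate_x, Function.comp_apply]
  abel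

/-- For `m ≥ 3`, with `x^k` the `k`-corolla and `x² = node [x,x]`:
`x ⧢ x^m = (m+1)·x^{m+1} + 2·Σ_{i=1}^m node [x,…,x², …,x] (x² in position i)
+ x·x^m + x^m·x`. -/
theorem shuffle_x_corolla (K : Type) [Field K] (m : ℕ) (hm : 3 ≤ m) :
    shuffleM K (some PTree.x) (some (PTree.node (List.replicate m PTree.x)))
      = (m + 1) • Finsupp.single (some (PTree.node (List.replicate (m + 1) PTree.x))) 1
        + 2 • ∑ i ∈ Finset.range m,
            Finsupp.single (some (PTree.node
              ((List.replicate m PTree.x).set i (PTree.node [PTree.x, PTree.x])))) 1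
        + Finsupp.single (some (PTree.node
            [PTree.x, PTree.node (List.replicate m PTree.x)])) 1
        + Finsupp.single (some (PTree.node
            [PTree.node (List.replicate m PTree.x), PTree.x])) 1 := by
  exact shuffle_x_corolla_general K m (by lia)
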